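/- Let d ≥ 1 and f : [0,1]^d → ℝ. Then f admits a MARS representation, i.e., f = f_{a₀,{ν_S}} on [0,1]^d for some (a₀,{ν_S}), if and only if there exist a₀ ∈ ℝ and, for each nonempty S ⊆ {1,…,d}, a function g_S : [0,1]^S → ℝ that has finite Hardy–Krause variation anchored at 0, is coordinate-wise right-continuous, and is coordinate-wise left-continuous at each point with some coordinate equal to 1 in each such coordinate, such that f(x) = a₀ + Σ_{∅≠S⊆{1,…,d}} ∫_{∏_{j∈S}[0,x_j]} g_S(t) dt for every x ∈ [0,1]^d (Lebesgue integrals on ℝ^S). Moreover, the two representations correspond via g_S(t) = ν_S([0,t] ∩ ∏_{j∈S}[0,1)) for t ∈ [0,1]^S, and under this correspondence Σ_{∅≠S} |ν_S|(∏_{j∈S}[0,1) \ {0}) = Σ_{∅≠S} V_HK0(g_S). -/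

import Mathlib

open Finset MeasureTheory
open scoped ENNReal

/-- A MARS representation: a constant `a0` together with, for each (nonempty) subset `S`
of coordinates, a finite signed Borel measure on `ℝ^S` concentrated on `Π_{j∈S} [0,1)`. -/
structure MarsRep (d : ℕ) where
  a0 : ℝ
  ν : ∀ S : Finset (Fin d), SignedMeasure ({j // j ∈ S} → ℝ)
  conc : ∀ S : Finset (Fin d),
    (ν S).totalVariation {t : {j // j ∈ S} → ℝ | ∀ j, 0 ≤ t j ∧ t j < 1}ᶜ = 0

/-- Integration of a real function against a finite signed measure. -/
noncomputable def sIntegral {α : Type*} [MeasurableSpace α]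
    (ν : SignedMeasure α) (f : α → ℝ) : ℝ :=
  (∫ t, f t ∂ν.toJordanDecomposition.posPart) -
    (∫ t, f t ∂ν.toJordanDecomposition.negPart)

/-- The function `f_{a₀,{ν_S}}` associated with a MARS representation. -/
noncomputable def marsFun {d : ℕ} (R : MarsRep d) (x : Fin d → ℝ) : ℝ :=
  R.a0 + ∑ S : Finset (Fin d),
    if S.Nonempty then
      sIntegral (R.ν S) fun t => ∏ j : {j // j ∈ S}, max (x j.1 - t j) 0
    else 0

/-- The variation `V({ν_S}) = Σ_{∅ ≠ S} |ν_S|(Π_{j∈S}[0,1) \ {0})` of a MARS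
representation. -/
noncomputable def marsVar {d : ℕ} (R : MarsRep d) : ℝ≥0∞ :=
  ∑ S : Finset (Fin d),
    if S.Nonempty then
      (R.ν S).totalVariation
        ({t : {j // j ∈ S} → ℝ | ∀ j, 0 ≤ t j ∧ t j < 1} \ {fun _ => 0})
    else 0

/-- The quasi-volume `Δ(g; [u,v])` of `g` on the axis-aligned rectangle `[u,v]`. -/
noncomputable def qvol {ι : Type*} [Fintype ι] [DecidableEq ι]
    (g : (ι → ℝ) → ℝ) (u v : ι → ℝ) : ℝ :=
  ∑ δ : ι → Bool,
    (-1 : ℝ) ^ (Finset.univ.filter fun k => δ k = true).card *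
      g fun k => if δ k then u k else v k

/-- The Vitali variation of `g : [0,1]^ι → ℝ`: the supremum over all axis-aligned grid
splits of `[0,1]^ι` of the sum of the absolute quasi-volumes of the cells. -/
noncomputable def vitali {ι : Type*} [Fintype ι] [DecidableEq ι]
    (g : (ι → ℝ) → ℝ) : ℝ≥0∞ :=
  ⨆ (N : ι → ℕ) (u : ∀ k, Fin (N k + 1) → ℝ) (_ : ∀ k, StrictMono (u k))
      (_ : ∀ k, u k 0 = 0) (_ : ∀ k, u k (Fin.last (N k)) = 1),
    ∑ l : ∀ k, Fin (N k),
      ENNReal.ofReal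
        |qvol g (fun k => u k ((l k).castSucc)) fun k => u k ((l k).succ)|

/-- The Hardy–Krause variation of `g` anchored at `0`: the sum over nonempty `T ⊆ ι`
of the Vitali variations of the faces of `g` (coordinates outside `T` set to `0`). -/
noncomputable def hk0 {ι : Type*} [Fintype ι] [DecidableEq ι]
    (g : (ι → ℝ) → ℝ) : ℝ≥0∞ :=
  ∑ T : Finset ι,
    if T.Nonempty then
      vitali fun t : {j // j ∈ T} → ℝ =>
        g fun k => if h : k ∈ T then t ⟨k, h⟩ else 0
    else 0

/-- The regularity conditions on a face function `g` in Proposition 2.4: finite HK0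
variation, coordinate-wise right-continuity on the cube, and coordinate-wise
left-continuity (within the cube) at points with a coordinate equal to `1`. -/
def GoodFace {ι : Type*} [Fintype ι] [DecidableEq ι] (g : (ι → ℝ) → ℝ) : Prop :=
  hk0 g ≠ ⊤ ∧
  (∀ t : ι → ℝ, (∀ j, t j ∈ Set.Icc (0 : ℝ) 1) → ∀ j0,
    ContinuousWithinAt (fun s => g (Function.update t j0 s))
      (Set.Icc (t j0) 1) (t j0)) ∧
  (∀ t : ι → ℝ, (∀ j, t j ∈ Set.Icc (0 : ℝ) 1) → ∀ j0, t j0 = 1 →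
    ContinuousWithinAt (fun s => g (Function.update t j0 s))
      (Set.Icc 0 (t j0)) (t j0))

/-- The "CDF" `t ↦ ν_S([0,t] ∩ Π_{j∈S}[0,1))` of the `S`-component of a MARS
representation. -/
noncomputable def repCDF {d : ℕ} (R : MarsRep d) (S : Finset (Fin d))
    (t : {j // j ∈ S} → ℝ) : ℝ :=
  R.ν S {s | ∀ j, 0 ≤ s j ∧ s j ≤ t j ∧ s j < 1}

set_option linter.unusedSectionVars false
set_option linter.deprecated false

open Filter Topology

section helpers
variable {ι : Type*} [Fintype ι] [DecidableEq ι]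

lemma qvol_prod (a : ι → ℝ → ℝ) (u v : ι → ℝ) :
    qvol (fun t => ∏ k, a k (t k)) u v = ∏ k, (a k (v k) - a k (u k)) := by
  have h1 : ∀ k, a k (v k) - a k (u k) = ∑ b : Bool, (if b then - a k (u k) else a k (v k)) := by
    intro k; simp; ring
  simp_rw [h1]
  rw [Finset.prod_univ_sum]
  simp only [qvol, Fintype.piFinset_univ]
  refine Finset.sum_congr rfl fun δ _ => ?_
  rw [← Finset.prod_const, Finset.prod_filter, ← Finset.prod_mul_distrib]
  refine Finset.prod_congr rfl fun k _ => ?_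
  by_cases h : δ k <;> simp [h]

lemma qvol_sum {κ : Type*} (s : Finset κ) (c : κ → ℝ) (G : κ → (ι → ℝ) → ℝ) (u v : ι → ℝ) :
    qvol (fun t => ∑ i ∈ s, c i * G i t) u v = ∑ i ∈ s, c i * qvol (G i) u v := by
  simp only [qvol, Finset.mul_sum]
  rw [Finset.sum_comm]
  refine Finset.sum_congr rfl fun i _ => Finset.sum_congr rfl fun δ _ => by ring

lemma qvol_mul (c : ℝ) (G : (ι → ℝ) → ℝ) (u v : ι → ℝ) :
    qvol (fun t => c * G t) u v = c * qvol G u v := by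
  simp only [qvol, Finset.mul_sum]
  refine Finset.sum_congr rfl fun δ _ => by ring

lemma qvol_sub (F G : (ι → ℝ) → ℝ) (u v : ι → ℝ) :
    qvol (fun t => F t - G t) u v = qvol F u v - qvol G u v := by
  simp only [qvol, ← Finset.sum_sub_distrib]
  refine Finset.sum_congr rfl fun δ _ => by ring

lemma qvol_integral {Ω : Type*} [MeasurableSpace Ω] (p : Measure Ω) (G : Ω → (ι → ℝ) → ℝ)
    (hG : ∀ t, Integrable (fun s => G s t) p) (u v : ι → ℝ) :
    qvol (fun t => ∫ s, G s t ∂p) u v = ∫ s, qvol (G s) u v ∂p := by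
  simp only [qvol]
  rw [integral_finsetSum]
  · simp_rw [integral_const_mul]
  · intro δ _
    exact (hG _).const_mul _

/-- one-dimensional indicator -/
noncomputable def ind1 (s τ : ℝ) : ℝ := if 0 ≤ s ∧ s ≤ τ ∧ s < 1 then 1 else 0

noncomputable def cdf1 (p : Measure (ι → ℝ)) (t : ι → ℝ) : ℝ :=
  p.real {s | ∀ j, 0 ≤ s j ∧ s j ≤ t j ∧ s j < 1}

def extT (T : Finset ι) (t : {j // j ∈ T} → ℝ) : ι → ℝ :=
  fun k => if h : k ∈ T then t ⟨k, h⟩ else 0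

def cellT (T : Finset ι) (u v : {j // j ∈ T} → ℝ) : Set (ι → ℝ) :=
  {s | ∀ k, if h : k ∈ T then u ⟨k, h⟩ < s k ∧ s k ≤ v ⟨k, h⟩ ∧ s k < 1 else s k = 0}

def ET (T : Finset ι) : Set (ι → ℝ) :=
  {s | ∀ k, if k ∈ T then 0 < s k ∧ s k < 1 else s k = 0}

lemma measurable_ind1 (τ : ℝ) : Measurable (fun s => ind1 s τ) := by
  unfold ind1
  refine Measurable.ite ?_ measurable_const measurable_const
  exact (measurableSet_Ici.inter (measurableSet_Iic.inter measurableSet_Iio))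

lemma ind1_nonneg (s τ : ℝ) : 0 ≤ ind1 s τ := by unfold ind1; split_ifs <;> norm_num
lemma ind1_le_one (s τ : ℝ) : ind1 s τ ≤ 1 := by unfold ind1; split_ifs <;> norm_num

lemma measurableSet_box (t : ι → ℝ) :
    MeasurableSet {s : ι → ℝ | ∀ j, 0 ≤ s j ∧ s j ≤ t j ∧ s j < 1} := by
  have : {s : ι → ℝ | ∀ j, 0 ≤ s j ∧ s j ≤ t j ∧ s j < 1}
    = Set.univ.pi fun j => Set.Ici 0 ∩ (Set.Iic (t j) ∩ Set.Iio 1) := by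
    ext s; simp [Set.mem_pi]
  rw [this]
  exact MeasurableSet.univ_pi fun j =>
    (measurableSet_Ici.inter (measurableSet_Iic.inter measurableSet_Iio))

lemma prod_ind1 (s t : ι → ℝ) : ∏ j, ind1 (s j) (t j) =
    Set.indicator {s : ι → ℝ | ∀ j, 0 ≤ s j ∧ s j ≤ t j ∧ s j < 1} (fun _ => (1:ℝ)) s := by
  unfold ind1
  rw [Finset.prod_ite_zero]
  simp [Set.indicator_apply]

lemma cdf1_eq (p : Measure (ι → ℝ)) (t : ι → ℝ) :
    cdf1 p t = ∫ s, ∏ j, ind1 (s j) (t j) ∂p := by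
  simp_rw [prod_ind1]
  rw [integral_indicator (measurableSet_box t)]
  simp [cdf1]

lemma integrable_ind1 (p : Measure (ι → ℝ)) [IsFiniteMeasure p] (t : ι → ℝ) :
    Integrable (fun s => ∏ j, ind1 (s j) (t j)) p := by
  simp_rw [prod_ind1]
  exact (integrable_const _).indicator (measurableSet_box t)

lemma measurableSet_cellT (T : Finset ι) (u v : {j // j ∈ T} → ℝ) :
    MeasurableSet (cellT T u v) := by
  have : cellT T u v = Set.univ.pi fun k => if h : k ∈ T then
      Set.Ioi (u ⟨k, h⟩) ∩ (Set.Iic (v ⟨k, h⟩) ∩ Set.Iio 1) else {0} := by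
    ext s; simp only [cellT, Set.mem_setOf_eq, Set.mem_univ_pi]
    refine forall_congr' fun k => ?_
    by_cases h : k ∈ T <;> simp [h]
  rw [this]
  refine MeasurableSet.univ_pi fun k => ?_
  by_cases h : k ∈ T
  · simp only [h, dif_pos]
    exact (measurableSet_Ioi.inter (measurableSet_Iic.inter measurableSet_Iio))
  · simp [h]

lemma measurableSet_ET (T : Finset ι) : MeasurableSet (ET T) := by
  have : ET T = Set.univ.pi fun k => if k ∈ T then Set.Ioo (0:ℝ) 1 else {0} := by
    ext s; simp only [ET, Set.mem_setOf_eq, Set.mem_univ_pi]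
    refine forall_congr' fun k => ?_
    by_cases h : k ∈ T <;> simp [h]
  rw [this]
  refine MeasurableSet.univ_pi fun k => ?_
  by_cases h : k ∈ T <;> simp [h]

lemma prod_extT (T : Finset ι) (f : ι → ℝ → ℝ) (t : {j // j ∈ T} → ℝ) :
    ∏ k, f k (extT T t k) = (∏ k ∈ univ \ T, f k 0) * ∏ k : {j // j ∈ T}, f k (t k) := by
  rw [← Finset.prod_sdiff (Finset.subset_univ T)]
  congr 1
  · refine Finset.prod_congr rfl fun k hk => ?_
    simp at hk; simp [extT, hk]
  · rw [← Finset.prod_coe_sort T]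
    refine Finset.prod_congr rfl fun k hk => ?_
    simp [extT]

lemma ind1_sub (s a b : ℝ) (ha : 0 ≤ a) (hab : a ≤ b) :
    ind1 s b - ind1 s a = if a < s ∧ s ≤ b ∧ s < 1 then 1 else 0 := by
  unfold ind1; grind

lemma qvol_cdf1 (p : Measure (ι → ℝ)) [IsFiniteMeasure p] (T : Finset ι)
    (u v : {j // j ∈ T} → ℝ) (hu : ∀ k, 0 ≤ u k) (huv : ∀ k, u k ≤ v k) :
    qvol (fun t => cdf1 p (extT T t)) u v = p.real (cellT T u v) := by
  simp_rw [cdf1_eq]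
  rw [qvol_integral p (fun s t => ∏ j, ind1 (s j) (extT T t j)) (fun t => integrable_ind1 p _)]
  have : ∀ s : ι → ℝ, qvol (fun t => ∏ j, ind1 (s j) (extT T t j)) u v =
      Set.indicator (cellT T u v) (fun _ => (1:ℝ)) s := by
    intro s
    simp_rw [prod_extT T (fun k => ind1 (s k))]
    rw [qvol_mul, qvol_prod (fun k : {j // j ∈ T} => ind1 (s k))]
    simp_rw [fun k => ind1_sub (s (k : {j // j ∈ T}).1) _ _ (hu k) (huv k)]
    unfold ind1
    rw [Finset.prod_ite_zero, Finset.prod_ite_zero]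
    simp only [Finset.prod_const_one, Set.indicator_apply]
    rw [ite_zero_mul_ite_zero, mul_one]
    congr 1
    simp only [cellT, Set.mem_setOf_eq, Finset.mem_univ, Finset.mem_sdiff, true_and, forall_const, eq_iff_iff]
    constructor
    · rintro ⟨h1, h2⟩ k
      by_cases h : k ∈ T
      · simp only [h, dif_pos]; exact h2 ⟨k, h⟩
      · simp only [h, dif_neg, not_false_eq_true]
        have := h1 k h; linarith
    · intro h
      refine ⟨fun k hk => ?_, fun k => ?_⟩
      · have := h k; simp only [hk, dif_neg, not_false_eq_true] at this; simp [this]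
      · have := h k.1; simpa using this
  simp_rw [this]
  rw [integral_indicator (measurableSet_cellT T u v)]
  simp


lemma clamp_aux1 (x y ε : ℝ) (h : |max (-1) (min 1 x) - y| < ε) : 1 - ε - |1 - x| ≤ y := by
  have h1 := abs_lt.1 h
  rcases le_total 1 x with hx | hx
  · rw [min_eq_left hx, max_eq_right (by norm_num)] at h1
    linarith [abs_nonneg (1 - x)]
  · rw [min_eq_right hx] at h1
    rw [abs_of_nonneg (by linarith)]
    rcases le_total (-1) x with h2 | h2
    · rw [max_eq_right h2] at h1; linarith
    · rw [max_eq_left h2] at h1; linarith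

lemma clamp_aux2 (x y ε : ℝ) (h : |max (-1) (min 1 x) - y| < ε) : 1 - ε - |-1 - x| ≤ -y := by
  have h1 := abs_lt.1 h
  rcases le_total x (-1) with hx | hx
  · rw [min_eq_right (by linarith), max_eq_left hx] at h1
    linarith [abs_nonneg (-1 - x)]
  · rw [abs_of_nonpos (by linarith)]
    rcases le_total 1 x with h2 | h2
    · rw [min_eq_left h2, max_eq_right (by norm_num)] at h1; linarith
    · rw [min_eq_right h2, max_eq_right hx] at h1; linarith

lemma cell_subset_ET (T : Finset ι) (u v : {j // j ∈ T} → ℝ) (hu : ∀ k, 0 ≤ u k) :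
    cellT T u v ⊆ ET T := by
  intro s hs k
  have := hs k
  by_cases h : k ∈ T
  · simp only [h, dif_pos, if_true] at this ⊢
    exact ⟨(hu _).trans_lt this.1, this.2.2⟩
  · simpa [h] using this

lemma grid_nonneg {N : ℕ} {u : Fin (N + 1) → ℝ} (hu : StrictMono u) (h0 : u 0 = 0)
    (i : Fin (N + 1)) : 0 ≤ u i := by
  rw [← h0]; exact hu.monotone (Fin.zero_le i)

lemma grid_le_one {N : ℕ} {u : Fin (N + 1) → ℝ} (hu : StrictMono u) (h1 : u (Fin.last N) = 1)
    (i : Fin (N + 1)) : u i ≤ 1 := by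
  rw [← h1]; exact hu.monotone (Fin.le_last i)

lemma cells_disjoint (T : Finset ι) {N : {j // j ∈ T} → ℕ} (u : ∀ k, Fin (N k + 1) → ℝ)
    (hu : ∀ k, StrictMono (u k)) :
    Pairwise (Function.onFun Disjoint (fun l : ∀ k, Fin (N k) =>
      cellT T (fun k => u k (l k).castSucc) (fun k => u k (l k).succ))) := by
  intro l l' hll
  obtain ⟨k, hk⟩ := Function.ne_iff.1 hll
  refine Set.disjoint_left.2 fun s hs hs' => ?_
  have h1 := hs k.1
  have h2 := hs' k.1
  simp only [k.2, dif_pos, Subtype.coe_eta] at h1 h2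
  rcases lt_or_gt_of_ne hk with h | h
  · have : u k (l k).succ ≤ u k (l' k).castSucc := (hu k).monotone (by
      rw [Fin.le_def]; simp; exact h)
    linarith [h1.2.1, h2.1]
  · have : u k (l' k).succ ≤ u k (l k).castSucc := (hu k).monotone (by
      rw [Fin.le_def]; simp; exact h)
    linarith [h2.2.1, h1.1]

lemma vitali_le (p n : Measure (ι → ℝ)) [IsFiniteMeasure p] [IsFiniteMeasure n] (T : Finset ι) :
    vitali (fun t => cdf1 p (extT T t) - cdf1 n (extT T t)) ≤ (p + n) (ET T) := by
  unfold vitali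
  refine iSup_le fun N => iSup_le fun u => iSup_le fun hu => iSup_le fun h0 => iSup_le fun h1 => ?_
  have hc : ∀ l : ∀ k, Fin (N k), ENNReal.ofReal
        |qvol (fun t => cdf1 p (extT T t) - cdf1 n (extT T t))
          (fun k => u k ((l k).castSucc)) fun k => u k ((l k).succ)| ≤
        (p + n) (cellT T (fun k => u k (l k).castSucc) (fun k => u k (l k).succ)) := by
    intro l
    have a1 : ∀ k, 0 ≤ u k (l k).castSucc := fun k => grid_nonneg (hu k) (h0 k) _
    have a2 : ∀ k, u k (l k).castSucc ≤ u k (l k).succ :=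
      fun k => (hu k).monotone (Fin.castSucc_lt_succ).le
    rw [qvol_sub, qvol_cdf1 p T _ _ a1 a2, qvol_cdf1 n T _ _ a1 a2]
    rw [← ofReal_measureReal (μ := p + n), measureReal_add_apply]
    refine ENNReal.ofReal_le_ofReal ?_
    rw [abs_le]; constructor <;> 
    linarith [measureReal_nonneg (μ := p) (s := cellT T (fun k => u k (l k).castSucc) (fun k => u k (l k).succ)),
     measureReal_nonneg (μ := n) (s := cellT T (fun k => u k (l k).castSucc) (fun k => u k (l k).succ))]
  refine (Finset.sum_le_sum fun l _ => hc l).trans ?_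
  rw [← tsum_fintype (L := .unconditional _), ← measure_iUnion (cells_disjoint T u hu) (fun l => measurableSet_cellT T _ _)]
  refine measure_mono (Set.iUnion_subset fun l => cell_subset_ET T _ _ fun k => ?_)
  exact grid_nonneg (hu k) (h0 k) _

lemma exists_cell (M : ℕ) (x : ℝ) (h0 : 0 < x) (h1 : x < 1) :
    ∃ l : Fin (M+1), ((l.castSucc : Fin (M+2)) : ℝ) / (M+1) < x ∧
      x ≤ ((l.succ : Fin (M+2)) : ℝ) / (M+1) := by
  have hM : (0:ℝ) < M + 1 := by positivity
  have hc : 0 < ⌈x * (M+1)⌉₊ := Nat.ceil_pos.2 (by positivity)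
  have hc2 : ⌈x * (M+1)⌉₊ ≤ M + 1 := Nat.ceil_le.2 (by push_cast; nlinarith)
  refine ⟨⟨⌈x * (M+1)⌉₊ - 1, by omega⟩, ?_, ?_⟩
  · rw [div_lt_iff₀ hM]
    refine Nat.lt_ceil.1 ?_
    simp only [Fin.val_castSucc]; omega
  · rw [le_div_iff₀ hM]
    refine (Nat.le_ceil _).trans ?_
    simp only [Fin.succ_mk]
    exact_mod_cast (by omega)

lemma le_vitali (p n : Measure (ι → ℝ)) [IsFiniteMeasure p] [IsFiniteMeasure n]
    (hpn : p ⟂ₘ n) (T : Finset ι) :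
    (p + n) (ET T) ≤ vitali (fun t => cdf1 p (extT T t) - cdf1 n (extT T t)) := by
  obtain ⟨Q, hQ, hpQ, hnQ⟩ := hpn
  set μ := p + n with hμ
  set h : (ι → ℝ) → ℝ := fun s => Set.indicator Q (fun _ => (-1:ℝ)) s + Set.indicator Qᶜ (fun _ => (1:ℝ)) s
  have hh : Integrable h μ := ((integrable_const _).indicator hQ).add
    ((integrable_const _).indicator hQ.compl)
  have hhp : ∀ᵐ s ∂p, h s = 1 := by
    have : ∀ᵐ s ∂p, s ∉ Q := measure_eq_zero_iff_ae_notMem.1 hpQ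
    filter_upwards [this] with s hs
    simp [h, hs]
  have hhn : ∀ᵐ s ∂n, h s = -1 := by
    have : ∀ᵐ s ∂n, s ∉ Qᶜ := measure_eq_zero_iff_ae_notMem.1 hnQ
    filter_upwards [this] with s hs
    simp at hs
    simp [h, hs]
  -- the key estimate
  have key : ∀ ε : ℝ, 0 < ε → μ (ET T) ≤ vitali (fun t => cdf1 p (extT T t) - cdf1 n (extT T t)) +
      ENNReal.ofReal (ε * (μ.real (ET T) + 1)) := by
    intro ε hε
    obtain ⟨φ, hφ, hφi⟩ := hh.exists_boundedContinuous_integral_sub_le hε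
    set ψ : (ι → ℝ) → ℝ := fun s => max (-1) (min 1 (φ s)) with hψ
    have hψc : Continuous ψ := by fun_prop
    have hK : IsCompact (Set.univ.pi fun _ : ι => Set.Icc (0:ℝ) 1) :=
      isCompact_univ_pi fun _ => isCompact_Icc
    have huc := hK.uniformContinuousOn_of_continuous hψc.continuousOn
    rw [Metric.uniformContinuousOn_iff] at huc
    obtain ⟨δ, hδ, huc⟩ := huc ε hε
    obtain ⟨M, hM⟩ := exists_nat_one_div_lt hδ
    have hM0 : (0:ℝ) < M + 1 := by positivity
    set u : ∀ k : {j // j ∈ T}, Fin (M + 1 + 1) → ℝ := fun _ i => (i : ℝ) / (M+1) with hudef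
    have hu : ∀ k, StrictMono (u k) := by
      intro k i j hij
      simp only [hudef]
      have : ((i:ℕ):ℝ) < ((j:ℕ):ℝ) := by exact_mod_cast hij
      gcongr
    have hu0 : ∀ k, u k 0 = 0 := by intro k; simp [hudef]
    have hu1 : ∀ k, u k (Fin.last (M+1)) = 1 := by
      intro k; simp only [hudef, Fin.val_last]; push_cast; exact div_self hM0.ne'
    set c : ({j // j ∈ T} → Fin (M+1)) → Set (ι → ℝ) := fun l =>
      cellT T (fun k => u k (l k).castSucc) (fun k => u k (l k).succ) with hc
    have hcm : ∀ l, MeasurableSet (c l) := fun l => measurableSet_cellT T _ _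
    have hcd : Pairwise (Function.onFun Disjoint c) := cells_disjoint T u hu
    have hcE : ⋃ l, c l = ET T := by
      refine Set.Subset.antisymm (Set.iUnion_subset fun l => cell_subset_ET T _ _ fun k => 
        grid_nonneg (hu k) (hu0 k) _) ?_
      intro s hs
      have : ∀ k : {j // j ∈ T}, ∃ l : Fin (M+1), u k l.castSucc < s k ∧ s k ≤ u k l.succ := by
        intro k
        have := hs k.1
        simp only [k.2, if_true] at this
        exact exists_cell M (s k) this.1 this.2
      choose l hl using this
      refine Set.mem_iUnion.2 ⟨l, fun k => ?_⟩
      have := hs k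
      by_cases hk : k ∈ T
      · simp only [hk, if_true, dif_pos] at this ⊢
        exact ⟨(hl ⟨k, hk⟩).1, (hl ⟨k, hk⟩).2, this.2⟩
      · simpa [hk] using this
    have hI : Integrable (fun s => 1 - ε - ‖h s - φ s‖) μ :=
      (integrable_const _).sub ((hh.sub hφi).norm)
    have hIp : Integrable (fun s => 1 - ε - ‖h s - φ s‖) p := hI.mono_measure (Measure.le_add_right le_rfl)
    have hIn : Integrable (fun s => 1 - ε - ‖h s - φ s‖) n := hI.mono_measure (Measure.le_add_left le_rfl)
    have cellb : ∀ l, ∫ s in c l, (1 - ε - ‖h s - φ s‖) ∂μ ≤ |qvol (fun t => cdf1 p (extT T t) - cdf1 n (extT T t))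
          (fun k => u k ((l k).castSucc)) fun k => u k ((l k).succ)| := by
      intro l
      have a1 : ∀ k, 0 ≤ u k (l k).castSucc := fun k => grid_nonneg (hu k) (hu0 k) _
      have a2 : ∀ k, u k (l k).castSucc ≤ u k (l k).succ :=
        fun k => (hu k).monotone (Fin.castSucc_lt_succ).le
      rw [qvol_sub, qvol_cdf1 p T _ _ a1 a2, qvol_cdf1 n T _ _ a1 a2]
      set v : ι → ℝ := extT T (fun k => u k (l k).succ) with hv
      have hvK : v ∈ (Set.univ.pi fun _ : ι => Set.Icc (0:ℝ) 1) := by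
        intro k _
        by_cases hk : k ∈ T
        · simp only [hv, extT, hk, dif_pos]
          exact ⟨grid_nonneg (hu ⟨k,hk⟩) (hu0 ⟨k,hk⟩) _, grid_le_one (hu ⟨k,hk⟩) (hu1 ⟨k,hk⟩) _⟩
        · simp [hv, extT, hk]
      have hs : ∀ s ∈ c l, |ψ s - ψ v| < ε := by
        intro s hs
        have hsE : s ∈ ET T := hcE ▸ Set.mem_iUnion.2 ⟨l, hs⟩
        have hsK : s ∈ (Set.univ.pi fun _ : ι => Set.Icc (0:ℝ) 1) := by
          intro k _
          have := hsE k
          by_cases hk : k ∈ T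
          · simp only [hk, if_true] at this; exact ⟨this.1.le, this.2.le⟩
          · simp only [hk, if_false] at this; simp [this]
        refine huc s hsK v hvK ?_
        rw [dist_pi_lt_iff hδ]
        intro k
        have h1 := hs k
        by_cases hk : k ∈ T
        · simp only [hk, dif_pos] at h1
          simp only [hv, extT, hk, dif_pos]
          rw [Real.dist_eq, abs_lt]
          have h3 : u ⟨k,hk⟩ (l ⟨k,hk⟩).succ = u ⟨k,hk⟩ (l ⟨k,hk⟩).castSucc + 1/(M+1) := by
            simp only [hudef, Fin.val_succ, Fin.val_castSucc]; push_cast; ring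
          constructor <;> linarith [h1.1, h1.2.1]
        · simp only [hk, dif_neg, not_false_eq_true] at h1
          simp [hv, extT, hk, h1, hδ]
      have hv1 : |ψ v| ≤ 1 := by
        rw [abs_le]; simp only [hψ]; constructor
        · exact le_max_left _ _
        · exact max_le (by norm_num) (min_le_left _ _)
      have b1 : ∫ s in c l, (1 - ε - ‖h s - φ s‖) ∂p ≤ ψ v * p.real (c l) := by
        calc _ ≤ ∫ s in c l, ψ v ∂p := by
              refine setIntegral_mono_on_ae hIp.integrableOn (integrable_const _).integrableOn (hcm l) ?_
              filter_upwards [hhp] with s h1 h2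
              have h3 := hs s h2
              rw [h1, Real.norm_eq_abs]
              exact clamp_aux1 _ _ _ h3
          _ = _ := by simp [mul_comm]
      have b2 : ∫ s in c l, (1 - ε - ‖h s - φ s‖) ∂n ≤ - ψ v * n.real (c l) := by
        calc _ ≤ ∫ s in c l, - ψ v ∂n := by
              refine setIntegral_mono_on_ae hIn.integrableOn (integrable_const _).integrableOn (hcm l) ?_
              filter_upwards [hhn] with s h1 h2
              have h3 := hs s h2
              rw [h1, Real.norm_eq_abs]
              exact clamp_aux2 _ _ _ h3
          _ = _ := by simp [mul_comm]
      rw [hμ, Measure.restrict_add, integral_add_measure hIp.integrableOn hIn.integrableOn]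
      calc _ ≤ ψ v * (p.real (c l) - n.real (c l)) := by linarith
        _ ≤ |ψ v * (p.real (c l) - n.real (c l))| := le_abs_self _
        _ = |ψ v| * |p.real (c l) - n.real (c l)| := abs_mul _ _
        _ ≤ 1 * |p.real (c l) - n.real (c l)| := by gcongr
        _ = _ := one_mul _
    have sumb : μ.real (ET T) - ε * (μ.real (ET T) + 1) ≤ ∑ l : ∀ k : {j // j ∈ T}, Fin (M+1), |qvol (fun t => cdf1 p (extT T t) - cdf1 n (extT T t))
          (fun k => u k ((l k).castSucc)) fun k => u k ((l k).succ)| := by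
      refine le_trans ?_ (Finset.sum_le_sum fun l _ => cellb l)
      rw [← integral_iUnion_fintype hcm hcd (fun l => hI.integrableOn), hcE]
      have hnorm : Integrable (fun s => ‖h s - φ s‖) μ := (hh.sub hφi).norm
      rw [integral_sub (integrable_const _).integrableOn hnorm.integrableOn]
      have : ∫ s in ET T, ‖h s - φ s‖ ∂μ ≤ ε := 
        (setIntegral_le_integral hnorm (ae_of_all _ fun _ => norm_nonneg _)).trans hφ
      have h2 : ∫ s in ET T, (1 - ε) ∂μ = μ.real (ET T) * (1 - ε) := by simp
      rw [h2]; linarith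
    have hle : ∑ l : ∀ k : {j // j ∈ T}, Fin (M+1), ENNReal.ofReal |qvol (fun t => cdf1 p (extT T t) - cdf1 n (extT T t))
          (fun k => u k ((l k).castSucc)) fun k => u k ((l k).succ)| ≤ 
          vitali (fun t => cdf1 p (extT T t) - cdf1 n (extT T t)) := by
      unfold vitali
      exact le_iSup_of_le (fun _ => M+1) (le_iSup_of_le u (le_iSup_of_le hu (le_iSup_of_le hu0 (le_iSup_of_le hu1 le_rfl))))
    refine le_trans ?_ (add_le_add_left hle _)
    rw [← ENNReal.ofReal_sum_of_nonneg (fun _ _ => abs_nonneg _), ← ENNReal.ofReal_add 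
      (Finset.sum_nonneg fun _ _ => abs_nonneg _) (by positivity), ← ofReal_measureReal (μ := μ)]
    exact ENNReal.ofReal_le_ofReal (by linarith)
  refine ENNReal.le_of_forall_pos_le_add fun ε hε _ => ?_
  have hpos : 0 < μ.real (ET T) + 1 := by positivity
  refine (key (ε / (μ.real (ET T) + 1)) (by positivity)).trans ?_
  rw [div_mul_cancel₀ _ hpos.ne']
  simp

lemma vitali_eq (p n : Measure (ι → ℝ)) [IsFiniteMeasure p] [IsFiniteMeasure n]
    (hpn : p ⟂ₘ n) (T : Finset ι) :
    vitali (fun t => cdf1 p (extT T t) - cdf1 n (extT T t)) = (p + n) (ET T) :=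
  le_antisymm (vitali_le p n T) (le_vitali p n hpn T)

lemma hk0_eq (p n : Measure (ι → ℝ)) [IsFiniteMeasure p] [IsFiniteMeasure n]
    (hpn : p ⟂ₘ n) :
    hk0 (fun t => cdf1 p t - cdf1 n t) =
      (p + n) ({t | ∀ j, 0 ≤ t j ∧ t j < 1} \ {fun _ => 0}) := by
  have h1 : hk0 (fun t => cdf1 p t - cdf1 n t) =
      ∑ T : Finset ι, (p + n) (if T.Nonempty then ET T else ∅) := by
    unfold hk0
    refine Finset.sum_congr rfl fun T _ => ?_
    split_ifs with h
    · exact vitali_eq p n hpn T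
    · simp
  rw [h1, ← tsum_fintype (L := .unconditional _), ← measure_iUnion]
  · congr 1
    ext s
    simp only [Set.mem_iUnion, Set.mem_diff, Set.mem_setOf_eq, Set.mem_singleton_iff]
    constructor
    · rintro ⟨T, hT⟩
      by_cases h : T.Nonempty
      · simp only [h, if_true] at hT
        refine ⟨fun j => ?_, ?_⟩
        · have := hT j
          by_cases hj : j ∈ T
          · simp only [hj, if_true] at this; exact ⟨this.1.le, this.2⟩
          · simp only [hj, if_false] at this; simp [this]
        · rintro rfl
          obtain ⟨k, hk⟩ := h
          have := hT k
          simp [hk] at this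
      · simp [h] at hT
    · rintro ⟨hs, hs0⟩
      refine ⟨univ.filter fun k => s k ≠ 0, ?_⟩
      have hne : (univ.filter fun k => s k ≠ 0).Nonempty := by
        obtain ⟨k, hk⟩ := Function.ne_iff.1 hs0
        exact ⟨k, by simpa using hk⟩
      rw [if_pos hne]
      intro k
      by_cases hk : s k = 0
      · simp [hk]
      · simp only [mem_filter, mem_univ, true_and, ne_eq, hk, not_false_eq_true, if_true]
        exact ⟨lt_of_le_of_ne (hs k).1 (Ne.symm hk), (hs k).2⟩
  · intro T T' hTT
    refine Set.disjoint_left.2 fun s hs hs' => hTT ?_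
    by_cases h : T.Nonempty <;> by_cases h' : T'.Nonempty <;> simp only [h, h', if_true, if_false, Set.mem_empty_iff_false] at hs hs'
    ext k
    have a := hs k
    have b := hs' k
    grind
  · intro T
    split_ifs
    · exact measurableSet_ET T
    · exact MeasurableSet.empty


lemma measurable_ind1_uncurry : Measurable (fun q : ℝ × ℝ => ind1 q.1 q.2) := by
  unfold ind1
  refine Measurable.ite ?_ measurable_const measurable_const
  exact ((measurableSet_le measurable_const measurable_fst).inter
    ((measurableSet_le measurable_fst measurable_snd).inter
      (measurableSet_lt measurable_fst measurable_const)))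

lemma abs_prod_ind1_le (s t : ι → ℝ) : ‖∏ j, ind1 (s j) (t j)‖ ≤ 1 := by
  rw [Real.norm_of_nonneg (Finset.prod_nonneg fun _ _ => ind1_nonneg _ _)]
  exact Finset.prod_le_one (fun _ _ => ind1_nonneg _ _) (fun _ _ => ind1_le_one _ _)

lemma integral_ind1 (s x : ℝ) (hs : 0 ≤ s ∧ s < 1) :
    ∫ t in Set.Icc 0 x, ind1 s t = max (x - s) 0 := by
  have : ∀ t, ind1 s t = Set.indicator (Set.Ici s) (fun _ => (1:ℝ)) t := by
    intro t; simp [ind1, Set.indicator_apply, hs]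
  simp_rw [this]
  rw [setIntegral_indicator measurableSet_Ici]
  have h2 : Set.Icc 0 x ∩ Set.Ici s = Set.Icc s x := by
    ext t; simp only [Set.mem_inter_iff, Set.mem_Icc, Set.mem_Ici]
    constructor
    · rintro ⟨⟨_, h⟩, h'⟩; exact ⟨h', h⟩
    · rintro ⟨h', h⟩; exact ⟨⟨hs.1.trans h', h⟩, h'⟩
  rw [h2]
  simp [Real.volume_real_Icc]

lemma isFinite_box (x : ι → ℝ) : IsFiniteMeasure
    ((volume : Measure (ι → ℝ)).restrict (Set.univ.pi fun j => Set.Icc (0:ℝ) (x j))) := by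
  refine ⟨?_⟩
  rw [Measure.restrict_apply_univ]
  exact (isCompact_univ_pi fun j => isCompact_Icc).measure_lt_top

lemma fubini_int (p : Measure (ι → ℝ)) [IsFiniteMeasure p] (x : ι → ℝ) :
    Integrable (fun q : (ι → ℝ) × (ι → ℝ) => ∏ j, ind1 (q.1 j) (q.2 j))
      (p.prod (volume.restrict (Set.univ.pi fun j => Set.Icc (0:ℝ) (x j)))) := by
  have := isFinite_box x
  refine Integrable.of_bound (C := 1) ?_ (ae_of_all _ fun q => abs_prod_ind1_le _ _)
  refine (Finset.measurable_prod _ fun j _ => ?_).aestronglyMeasurable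
  have hm : Measurable (fun q : (ι → ℝ) × (ι → ℝ) => (q.1 j, q.2 j)) :=
    ((measurable_pi_apply j).comp measurable_fst).prodMk ((measurable_pi_apply j).comp measurable_snd)
  exact measurable_ind1_uncurry.comp hm

lemma cdf1_integrableOn (p : Measure (ι → ℝ)) [IsFiniteMeasure p] (x : ι → ℝ) :
    IntegrableOn (cdf1 p) (Set.univ.pi fun j => Set.Icc (0:ℝ) (x j)) := by
  have := isFinite_box x
  have := (fubini_int p x).integral_prod_right
  refine this.congr (ae_of_all _ fun t => ?_)
  simp [cdf1_eq]

lemma fubini_cdf (p : Measure (ι → ℝ)) [IsFiniteMeasure p] 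
    (hp : p {t | ∀ j, 0 ≤ t j ∧ t j < 1}ᶜ = 0) (x : ι → ℝ) :
    ∫ s, ∏ j, max (x j - s j) 0 ∂p =
      ∫ t in Set.univ.pi (fun j => Set.Icc (0:ℝ) (x j)), cdf1 p t := by
  have := isFinite_box x
  simp_rw [cdf1_eq]
  rw [← integral_integral_swap (fubini_int p x)]
  refine integral_congr_ae ?_
  have : ∀ᵐ s ∂p, s ∈ {t : ι → ℝ | ∀ j, 0 ≤ t j ∧ t j < 1} := by
    rw [ae_iff]; exact hp
  filter_upwards [this] with s hs
  rw [volume_pi, Measure.restrict_pi_pi, integral_fintype_prod_eq_prod (fun j t => ind1 (s j) t)]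
  exact Finset.prod_congr rfl fun j _ => (integral_ind1 _ _ (hs j)).symm

lemma ind1_right (s t : ℝ) : ContinuousWithinAt (fun τ => ind1 s τ) (Set.Icc t 1) t := by
  have h : ContinuousWithinAt (fun τ => ind1 s τ) (Set.Ici t) t := by
    rcases le_or_gt s t with h | h
    · refine (continuousWithinAt_const (b := ind1 s t)).congr (fun τ hτ => ?_) rfl
      have : s ≤ τ := h.trans hτ
      simp [ind1, h, this]
    · refine (continuousWithinAt_const (b := ind1 s t)).congr_of_eventuallyEq ?_ rfl
      filter_upwards [mem_nhdsWithin_of_mem_nhds (Iio_mem_nhds h)] with τ hτ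
      simp [ind1, not_le.2 h, not_le.2 (Set.mem_Iio.1 hτ)]
  exact h.mono Set.Icc_subset_Ici_self

lemma ind1_left (s : ℝ) : ContinuousWithinAt (fun τ => ind1 s τ) (Set.Icc 0 1) 1 := by
  rcases lt_or_ge s 1 with h | h
  · refine (continuousWithinAt_const (b := ind1 s 1)).congr_of_eventuallyEq ?_ rfl
    filter_upwards [mem_nhdsWithin_of_mem_nhds (Ioi_mem_nhds h)] with τ hτ
    simp [ind1, h, h.le, (Set.mem_Ioi.1 hτ).le]
  · refine (continuousWithinAt_const (b := ind1 s 1)).congr (fun τ hτ => ?_) rfl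
    simp [ind1, not_lt.2 h]

lemma cdf1_cont (p : Measure (ι → ℝ)) [IsFiniteMeasure p] (t : ι → ℝ) (j0 : ι) (A : Set ℝ)
    (hA : ∀ s, ContinuousWithinAt (fun τ => ind1 s τ) A (t j0)) :
    ContinuousWithinAt (fun τ => cdf1 p (Function.update t j0 τ)) A (t j0) := by
  simp_rw [cdf1_eq]
  refine continuousWithinAt_of_dominated (bound := fun _ => 1)
    (Eventually.of_forall fun τ => (integrable_ind1 p _).aestronglyMeasurable)
    (Eventually.of_forall fun τ => ae_of_all _ fun s => abs_prod_ind1_le _ _)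
    (integrable_const _) (ae_of_all _ fun s => ?_)
  refine tendsto_finsetProd _ fun j _ => ?_
  by_cases h : j = j0
  · subst h; simpa [ContinuousWithinAt] using hA (s j)
  · simpa [Function.update_of_ne h] using tendsto_const_nhds

lemma goodFace_cdf (p n : Measure (ι → ℝ)) [IsFiniteMeasure p] [IsFiniteMeasure n]
    (hpn : p ⟂ₘ n) : GoodFace (fun t => cdf1 p t - cdf1 n t) := by
  refine ⟨?_, fun t ht j0 => ?_, fun t ht j0 h1 => ?_⟩
  · rw [hk0_eq p n hpn]; exact measure_ne_top _ _
  · exact (cdf1_cont p t j0 _ fun s => ind1_right s _).sub (cdf1_cont n t j0 _ fun s => ind1_right s _)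
  · refine (cdf1_cont p t j0 _ fun s => ?_).sub (cdf1_cont n t j0 _ fun s => ?_) <;>
    · rw [h1]; exact ind1_left s

lemma repCDF_eq {d : ℕ} (R : MarsRep d) (S : Finset (Fin d)) :
    repCDF R S = fun t => cdf1 (R.ν S).toJordanDecomposition.posPart t -
      cdf1 (R.ν S).toJordanDecomposition.negPart t := by
  funext t
  unfold repCDF cdf1
  exact SignedMeasure.apply_eq_posPart_real_sub_negPart_real (R.ν S) (measurableSet_box t)

lemma part2 {d : ℕ} (R : MarsRep d) :
      (∀ S : Finset (Fin d), S.Nonempty → GoodFace (repCDF R S)) ∧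
      (∀ x : Fin d → ℝ, 
        marsFun R x = R.a0 + ∑ S : Finset (Fin d),
          if S.Nonempty then
            ∫ t in Set.univ.pi fun j : {j // j ∈ S} => Set.Icc (0 : ℝ) (x j.1),
              repCDF R S t
          else 0) ∧
      marsVar R = ∑ S : Finset (Fin d),
        if S.Nonempty then hk0 (repCDF R S) else 0 := by
  refine ⟨fun S _ => ?_, fun x => ?_, ?_⟩
  · rw [repCDF_eq]; exact goodFace_cdf _ _ (R.ν S).toJordanDecomposition.mutuallySingular
  · unfold marsFun
    congr 1
    refine Finset.sum_congr rfl fun S _ => ?_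
    split_ifs with h
    · have hc := R.conc S
      simp only [SignedMeasure.totalVariation, Measure.add_apply, add_eq_zero] at hc
      rw [repCDF_eq, sIntegral, integral_sub (cdf1_integrableOn _ (fun j : {j // j ∈ S} => x j.1)) (cdf1_integrableOn _ (fun j : {j // j ∈ S} => x j.1)),
        fubini_cdf _ hc.1 (fun j : {j // j ∈ S} => x j.1), fubini_cdf _ hc.2 (fun j : {j // j ∈ S} => x j.1)]
    · rfl
  · unfold marsVar
    refine Finset.sum_congr rfl fun S _ => ?_
    split_ifs with h
    · rw [repCDF_eq, hk0_eq _ _ (R.ν S).toJordanDecomposition.mutuallySingular]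
      rfl
    · rfl


lemma tele {N : ℕ} (b : Fin (N+1) → ℝ) (q : Fin (N+1)) :
    ∑ i : Fin N, (b i.succ - b i.castSucc) * (if i.succ ≤ q then (1:ℝ) else 0) = b q - b 0 := by
  induction q using Fin.induction with
  | zero => simp
  | succ j ih =>
    have h : ∀ i : Fin N, (if i.succ ≤ j.succ then (1:ℝ) else 0) =
        (if i.succ ≤ j.castSucc then (1:ℝ) else 0) + (if i = j then 1 else 0) := by
      intro i
      have e1 : i.succ ≤ j.succ ↔ i.1 ≤ j.1 := by simp
      have e2 : i.succ ≤ j.castSucc ↔ i.1 < j.1 := by simp [Fin.le_def, Nat.succ_le_iff]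
      have e3 : i = j ↔ i.1 = j.1 := Fin.ext_iff
      simp only [e1, e2, e3]
      rcases lt_trichotomy i.1 j.1 with h | h | h
      · simp [h, h.le, h.ne]
      · simp [h]
      · simp [not_le.2 h, not_lt.2 h.le, h.ne']
    simp_rw [h, mul_add, Finset.sum_add_distrib, ih]
    simp

noncomputable def wt {N : ℕ} (g : (ι → ℝ) → ℝ) (u : Fin (N+1) → ℝ) (T : Finset ι)
    (l : {j // j ∈ T} → Fin N) : ℝ :=
  qvol (fun t => g (extT T t)) (fun k => u (l k).castSucc) (fun k => u (l k).succ)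

def ptT {N : ℕ} (u : Fin (N+1) → ℝ) (T : Finset ι)
    (l : {j // j ∈ T} → Fin N) : ι → ℝ := extT T (fun k => u (l k).succ)

lemma wt_congr {N : ℕ} (g G : (ι → ℝ) → ℝ) (u : Fin (N+1) → ℝ) (h0 : u 0 = 0)
    (h : ∀ r : ι → Fin (N+1), g (fun k => u (r k)) = G (fun k => u (r k))) (T : Finset ι)
    (l : {j // j ∈ T} → Fin N) : wt g u T l = wt G u T l := by
  unfold wt qvol
  refine Finset.sum_congr rfl fun δ _ => ?_
  congr 1
  have : extT T (fun k => if δ k then u (l k).castSucc else u (l k).succ) =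
      fun k => u (if h : k ∈ T then (if δ ⟨k,h⟩ then (l ⟨k,h⟩).castSucc else (l ⟨k,h⟩).succ) else 0) := by
    funext k
    unfold extT
    by_cases hk : k ∈ T
    · by_cases hd : δ ⟨k, hk⟩ <;> simp [hk, hd]
    · simp [hk, h0]
  beta_reduce
  rw [this]; exact h _

lemma wt_prod {N : ℕ} (a : ι → ℝ → ℝ) (u : Fin (N+1) → ℝ) (hu : StrictMono u) (h0 : u 0 = 0)
    (q : ι → Fin (N+1)) :
    ∑ T : Finset ι, ∑ l : {j // j ∈ T} → Fin N, wt (fun t => ∏ k, a k (t k)) u T l *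
      (∏ k, if ptT u T l k ≤ u (q k) then (1:ℝ) else 0) = ∏ k, a k (u (q k)) := by
  have h1 : ∀ T : Finset ι, ∑ l : {j // j ∈ T} → Fin N, wt (fun t => ∏ k, a k (t k)) u T l *
      (∏ k, if ptT u T l k ≤ u (q k) then (1:ℝ) else 0) =
      (∏ k ∈ T, (a k (u (q k)) - a k 0)) * ∏ k ∈ univ \ T, a k 0 := by
    intro T
    have h2 : ∀ l : {j // j ∈ T} → Fin N, wt (fun t => ∏ k, a k (t k)) u T l *
      (∏ k, if ptT u T l k ≤ u (q k) then (1:ℝ) else 0) =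
      (∏ k ∈ univ \ T, a k 0) * ∏ k : {j // j ∈ T}, ((a k (u (l k).succ) - a k (u (l k).castSucc)) *
        (if (l k).succ ≤ q k then (1:ℝ) else 0)) := by
      intro l
      unfold wt ptT
      rw [prod_extT T (fun k y => if y ≤ u (q k) then (1:ℝ) else 0)]
      simp_rw [prod_extT T a]
      rw [qvol_mul, qvol_prod (fun k : {j // j ∈ T} => a k), Finset.prod_mul_distrib]
      have h3 : ∏ k ∈ univ \ T, (if 0 ≤ u (q k) then (1:ℝ) else 0) = 1 := by
        refine Finset.prod_eq_one fun k _ => if_pos (grid_nonneg hu h0 _)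
      rw [h3]
      simp_rw [hu.le_iff_le]
      ring
    simp_rw [h2]
    rw [← Finset.mul_sum, mul_comm]
    congr 1
    have := Finset.prod_univ_sum (fun _ : {j // j ∈ T} => (univ : Finset (Fin N)))
      (fun k i => (a k (u i.succ) - a k (u i.castSucc)) * (if i.succ ≤ q k then (1:ℝ) else 0))
    rw [Fintype.piFinset_univ] at this
    rw [← this, ← Finset.prod_coe_sort T]
    refine Finset.prod_congr rfl fun k _ => ?_
    rw [tele (fun i => a k (u i)) (q k), h0]
  simp_rw [h1]
  rw [← Finset.powerset_univ, ← Finset.prod_add]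
  simp

lemma wt_sum {N : ℕ} (g : (ι → ℝ) → ℝ) (u : Fin (N+1) → ℝ) (hu : StrictMono u) (h0 : u 0 = 0)
    (q : ι → Fin (N+1)) :
    ∑ T : Finset ι, ∑ l : {j // j ∈ T} → Fin N, wt g u T l *
      (∏ k, if ptT u T l k ≤ u (q k) then (1:ℝ) else 0) = g (fun k => u (q k)) := by
  set b : (ι → Fin (N+1)) → ι → ℝ → ℝ := fun r k y => if y = u (r k) then (1:ℝ) else 0
  set G : (ι → ℝ) → ℝ := fun t => ∑ r : ι → Fin (N+1), g (fun k => u (r k)) * ∏ k, b r k (t k)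
  have hG : ∀ r : ι → Fin (N+1), g (fun k => u (r k)) = G (fun k => u (r k)) := by
    intro r
    simp only [G, b, hu.injective.eq_iff]
    rw [Finset.sum_eq_single r]
    · simp
    · intro r' _ hr
      obtain ⟨k, hk⟩ := Function.ne_iff.1 hr
      rw [Finset.prod_eq_zero (Finset.mem_univ k) (if_neg (Ne.symm hk)), mul_zero]
    · simp
  simp_rw [wt_congr g G u h0 hG]
  rw [hG]
  have hw : ∀ (T : Finset ι) (l : {j // j ∈ T} → Fin N), wt G u T l =
      ∑ r : ι → Fin (N+1), g (fun k => u (r k)) * wt (fun t => ∏ k, b r k (t k)) u T l := by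
    intro T l
    unfold wt
    exact qvol_sum univ (fun r : ι → Fin (N+1) => g (fun k => u (r k))) (fun r t => ∏ k, b r k (extT T t k)) _ _
  simp_rw [hw, Finset.sum_mul]
  have : ∀ T : Finset ι, ∑ l : {j // j ∈ T} → Fin N, ∑ r : ι → Fin (N+1),
      g (fun k => u (r k)) * wt (fun t => ∏ k, b r k (t k)) u T l *
        (∏ k, if ptT u T l k ≤ u (q k) then (1:ℝ) else 0) =
      ∑ r : ι → Fin (N+1), g (fun k => u (r k)) * ∑ l : {j // j ∈ T} → Fin N,
        wt (fun t => ∏ k, b r k (t k)) u T l *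
        (∏ k, if ptT u T l k ≤ u (q k) then (1:ℝ) else 0) := by
    intro T
    rw [Finset.sum_comm]
    refine Finset.sum_congr rfl fun r _ => ?_
    rw [Finset.mul_sum]
    exact Finset.sum_congr rfl fun l _ => by ring
  simp_rw [this]
  rw [Finset.sum_comm]
  simp only [G]
  refine Finset.sum_congr rfl fun r _ => ?_
  rw [← Finset.mul_sum, wt_prod (b r) u hu h0 q]

lemma exists_grid (F : Finset ℝ) : ∃ (N : ℕ) (u : Fin (N+1) → ℝ), StrictMono u ∧ u 0 = 0 ∧
    u (Fin.last N) = 1 ∧ ∀ x ∈ F, x ∈ Set.Icc (0:ℝ) 1 → ∃ i, u i = x := by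
  set A : Finset ℝ := insert 0 (insert 1 (F.filter fun x => x ∈ Set.Icc (0:ℝ) 1)) with hA
  have h0A : (0:ℝ) ∈ A := by simp [hA]
  have h1A : (1:ℝ) ∈ A := by simp [hA]
  have hle : ∀ x ∈ A, 0 ≤ x ∧ x ≤ 1 := by
    intro x hx
    simp only [hA, Finset.mem_insert, Finset.mem_filter, Set.mem_Icc] at hx
    rcases hx with rfl | rfl | h
    · norm_num
    · norm_num
    · exact h.2
  have hc : A.card = (A.card - 1) + 1 := by
    have := Finset.card_pos.2 ⟨_, h0A⟩; omega
  set e := A.orderEmbOfFin hc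
  have hr : ∀ x ∈ A, ∃ i, e i = x := by
    intro x hx
    have : x ∈ Set.range e := by rw [Finset.range_orderEmbOfFin]; exact hx
    exact this
  refine ⟨A.card - 1, e, e.strictMono, ?_, ?_, fun x hx h => hr x (by simp only [hA, Finset.mem_insert, Finset.mem_filter]; exact Or.inr (Or.inr ⟨hx, h⟩))⟩
  · obtain ⟨i, hi⟩ := hr 0 h0A
    refine le_antisymm ?_ (hle _ (Finset.orderEmbOfFin_mem A hc 0)).1
    rw [← hi]; exact e.monotone (Fin.zero_le i)
  · obtain ⟨i, hi⟩ := hr 1 h1A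
    refine le_antisymm (hle _ (Finset.orderEmbOfFin_mem A hc _)).2 ?_
    rw [← hi]; exact e.monotone (Fin.le_last i)

lemma wt_bound {N : ℕ} (g : (ι → ℝ) → ℝ) (u : Fin (N+1) → ℝ) (hu : StrictMono u) (h0 : u 0 = 0)
    (h1 : u (Fin.last N) = 1) :
    ∑ T : Finset ι, ∑ l : {j // j ∈ T} → Fin N, ENNReal.ofReal |wt g u T l| ≤
      hk0 g + ENNReal.ofReal |g 0| := by
  have hb : ∀ T : Finset ι, ∑ l : {j // j ∈ T} → Fin N, ENNReal.ofReal |wt g u T l| ≤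
      (if T.Nonempty then vitali (fun t : {j // j ∈ T} → ℝ => g (extT T t)) else 0) +
       (if T = ∅ then ENNReal.ofReal |g 0| else 0) := by
    intro T
    rcases T.eq_empty_or_nonempty with rfl | hT
    · simp only [Finset.not_nonempty_empty, if_false, if_true, zero_add]
      have : ∀ l : {j // j ∈ (∅ : Finset ι)} → Fin N, wt g u ∅ l = g 0 := by
        intro l
        unfold wt qvol
        rw [Fintype.sum_unique]
        have e : ∀ t : {j // j ∈ (∅ : Finset ι)} → ℝ, extT ∅ t = 0 := by
          intro t; funext k; simp [extT]
        simp [e]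
      simp [this]
    · rw [if_pos hT]
      refine le_trans ?_ le_self_add
      unfold vitali
      exact le_iSup_of_le (fun _ => N) (le_iSup_of_le (fun _ => u) (le_iSup_of_le (fun _ => hu) (le_iSup_of_le (fun _ => h0) (le_iSup_of_le (fun _ => h1) le_rfl))))
  refine (Finset.sum_le_sum fun T _ => hb T).trans ?_
  rw [Finset.sum_add_distrib]
  refine add_le_add le_rfl ?_
  simp


open scoped NNReal

lemma discrete_one {κ E : Type*} [Fintype κ] [MeasurableSpace E] (w : κ → ℝ) (pt : κ → E)
    (C : ℝ≥0) (h : ∑ i, ENNReal.ofReal |w i| ≤ C) : ∃ P : FiniteMeasure E,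
      P.mass ≤ C ∧ (∀ A, MeasurableSet A → (∀ i, pt i ∉ A) → P A = 0) ∧
      ∀ A, MeasurableSet A → (P : Measure E).real A =
        ∑ i, max (w i) 0 * Set.indicator A (fun _ => (1:ℝ)) (pt i) := by
  set m : Measure E := ∑ i, ENNReal.ofReal (w i) • Measure.dirac (pt i) with hm
  have hmA : ∀ A, MeasurableSet A → m A = ∑ i, ENNReal.ofReal (w i) * A.indicator 1 (pt i) := by
    intro A hA
    simp [hm, Measure.finsetSum_apply, Measure.dirac_apply' _ hA]
  have huniv : m Set.univ ≤ C := by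
    rw [hmA _ MeasurableSet.univ]
    refine le_trans (Finset.sum_le_sum fun i _ => ?_) h
    simp only [Set.indicator_univ, Pi.one_apply, mul_one]
    exact ENNReal.ofReal_le_ofReal (le_abs_self _)
  have hfin : IsFiniteMeasure m := ⟨huniv.trans_lt ENNReal.coe_lt_top⟩
  obtain ⟨P, hPm⟩ : ∃ P : FiniteMeasure E, (P : Measure E) = m := ⟨⟨m, hfin⟩, rfl⟩
  refine ⟨P, ?_, ?_, ?_⟩
  · rw [← ENNReal.coe_le_coe, FiniteMeasure.ennreal_mass, hPm]; exact huniv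
  · intro A hA hp
    rw [FiniteMeasure.null_iff_toMeasure_null]
    rw [hPm, hmA A hA]
    exact Finset.sum_eq_zero fun i _ => by simp [hp i]
  · intro A hA
    rw [hPm, measureReal_def, hmA A hA, ENNReal.toReal_sum]
    · refine Finset.sum_congr rfl fun i _ => ?_
      by_cases hi : pt i ∈ A <;> simp [hi, ENNReal.toReal_ofReal']
    · intro i _
      by_cases hi : pt i ∈ A <;> simp [hi]

lemma discrete_two {κ E : Type*} [Fintype κ] [MeasurableSpace E] (w : κ → ℝ) (pt : κ → E)
    (C : ℝ≥0) (h : ∑ i, ENNReal.ofReal |w i| ≤ C) : ∃ P Q : FiniteMeasure E,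
      P.mass ≤ C ∧ Q.mass ≤ C ∧ (∀ A, MeasurableSet A → (∀ i, pt i ∉ A) → P A = 0 ∧ Q A = 0) ∧
      ∀ A, MeasurableSet A → (P : Measure E).real A - (Q : Measure E).real A =
        ∑ i, w i * Set.indicator A (fun _ => (1:ℝ)) (pt i) := by
  obtain ⟨P, hP, hP0, hPA⟩ := discrete_one w pt C h
  obtain ⟨Q, hQ, hQ0, hQA⟩ := discrete_one (fun i => - w i) pt C (by simpa using h)
  refine ⟨P, Q, hP, hQ, fun A hA hp => ⟨hP0 A hA hp, hQ0 A hA hp⟩, fun A hA => ?_⟩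
  rw [hPA A hA, hQA A hA, ← Finset.sum_sub_distrib]
  refine Finset.sum_congr rfl fun i _ => ?_
  rw [← sub_mul]
  congr 1
  rcases le_total (w i) 0 with h | h
  · rw [max_eq_right h, max_eq_left (by linarith)]; ring
  · rw [max_eq_left h, max_eq_right (by linarith)]; ring

def cubeK (ι : Type*) : Set (ι → ℝ) := Set.univ.pi fun _ => Set.Icc (0:ℝ) 1

lemma approx (g : (ι → ℝ) → ℝ) (hg : hk0 g ≠ ⊤) : ∃ C : ℝ≥0, ∀ F : Finset ℝ,
    ∃ P Q : FiniteMeasure (ι → ℝ), (P.mass ≤ C ∧ P (cubeK ι)ᶜ = 0) ∧ (Q.mass ≤ C ∧ Q (cubeK ι)ᶜ = 0) ∧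
      ∀ t : ι → ℝ, (∀ k, t k ∈ F ∧ t k ∈ Set.Icc (0:ℝ) 1) →
        (P : Measure (ι → ℝ)).real (Set.Iic t) - (Q : Measure (ι → ℝ)).real (Set.Iic t) = g t := by
  refine ⟨(hk0 g + ENNReal.ofReal |g 0|).toNNReal, fun F => ?_⟩
  obtain ⟨N, u, hu, h0, h1, hF⟩ := exists_grid F
  have hb := wt_bound g u hu h0 h1
  rw [← ENNReal.coe_toNNReal (ENNReal.add_ne_top.2 ⟨hg, ENNReal.ofReal_ne_top⟩)] at hb
  obtain ⟨P, Q, hP, hQ, hz, hA⟩ := discrete_two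
    (fun i : (Σ T : Finset ι, ({j // j ∈ T} → Fin N)) => wt g u i.1 i.2) (fun i => ptT u i.1 i.2)
    _ (by rw [Fintype.sum_sigma]; exact hb)
  have hK : MeasurableSet (cubeK ι)ᶜ := (MeasurableSet.univ_pi fun _ => measurableSet_Icc).compl
  have hpt : ∀ i : (Σ T : Finset ι, ({j // j ∈ T} → Fin N)), ptT u i.1 i.2 ∉ (cubeK ι)ᶜ := by
    rintro ⟨T, l⟩
    simp only [Set.mem_compl_iff, not_not]
    intro k _
    unfold ptT extT
    split_ifs
    · exact ⟨grid_nonneg hu h0 _, grid_le_one hu h1 _⟩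
    · simp
  refine ⟨P, Q, ⟨hP, (hz _ hK hpt).1⟩, ⟨hQ, (hz _ hK hpt).2⟩, fun t ht => ?_⟩
  have hq : ∀ k, ∃ i, u i = t k := fun k => hF _ (ht k).1 (ht k).2
  choose q hq using hq
  have htq : t = fun k => u (q k) := funext fun k => (hq k).symm
  rw [hA _ measurableSet_Iic, htq, ← wt_sum g u hu h0 q, Fintype.sum_sigma]
  refine Finset.sum_congr rfl fun T _ => Finset.sum_congr rfl fun l _ => ?_
  congr 1
  rw [Finset.prod_ite_zero]
  by_cases hle : ∀ k, ptT u T l k ≤ u (q k)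
  · rw [Set.indicator_of_mem (by exact hle)]
    simp [hle]
  · rw [Set.indicator_of_notMem (by exact hle), if_neg (by simpa using hle)]

lemma tendsto_Iic {κ : Type*} (L : Ultrafilter κ) (μs : κ → FiniteMeasure (ι → ℝ))
    (μ : FiniteMeasure (ι → ℝ)) (h : Tendsto μs L (𝓝 μ)) (t : ι → ℝ)
    (ht : ∀ k, (μ : Measure (ι → ℝ)) {s | s k = t k} = 0) :
    Tendsto (fun i => (μs i : Measure (ι → ℝ)).real (Set.Iic t)) L
      (𝓝 ((μ : Measure (ι → ℝ)).real (Set.Iic t))) := by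
  have hmass : Tendsto (fun i => (μs i : Measure (ι → ℝ)) Set.univ) L (𝓝 ((μ : Measure (ι → ℝ)) Set.univ)) := by
    have := h.mass
    simp_rw [← FiniteMeasure.ennreal_mass]
    exact ENNReal.tendsto_coe.2 this
  set B : Set (ι → ℝ) := {s | ∃ k, t k ≤ s k}
  have hB : IsClosed B := by
    have : B = ⋃ k, {s | t k ≤ s k} := by ext; simp [B]
    rw [this]
    exact isClosed_iUnion_of_finite fun k => isClosed_le continuous_const (continuous_apply k)
  have hI : IsClosed (Set.Iic t) := isClosed_Iic
  have h1 := FiniteMeasure.limsup_measure_closed_le_of_tendsto h hI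
  have h2 := FiniteMeasure.limsup_measure_closed_le_of_tendsto h hB
  have hcov : ∀ m : Measure (ι → ℝ), m Set.univ ≤ m (Set.Iic t) + m B := by
    intro m
    refine le_trans (measure_mono ?_) (measure_union_le _ _)
    intro s _
    by_cases hs : s ∈ B
    · exact Or.inr hs
    · left
      simp only [B, Set.mem_setOf_eq, not_exists, not_le] at hs
      exact fun k => (hs k).le
  have hinter : (μ : Measure (ι → ℝ)) (Set.Iic t ∩ B) = 0 := by
    refine measure_mono_null (t := ⋃ k, {s : ι → ℝ | s k = t k}) ?_ (measure_iUnion_null ht)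
    rintro s ⟨hs, k, hk⟩
    exact Set.mem_iUnion.2 ⟨k, le_antisymm (hs k) hk⟩
  have hdis : (μ : Measure (ι → ℝ)) Set.univ = (μ : Measure (ι → ℝ)) (Set.Iic t) + (μ : Measure (ι → ℝ)) B := by
    refine le_antisymm (hcov _) ?_
    rw [← measure_union_add_inter _ hB.measurableSet, hinter, add_zero]
    exact measure_mono (Set.subset_univ _)
  have h3 : Tendsto (fun i => (μs i : Measure (ι → ℝ)) (Set.Iic t)) L (𝓝 ((μ : Measure (ι → ℝ)) (Set.Iic t))) := by
    have ha := (L.map (fun i => (μs i : Measure (ι → ℝ)) (Set.Iic t))).le_nhds_lim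
    have hb := (L.map (fun i => (μs i : Measure (ι → ℝ)) B)).le_nhds_lim
    set α := (L.map (fun i => (μs i : Measure (ι → ℝ)) (Set.Iic t))).lim
    set β := (L.map (fun i => (μs i : Measure (ι → ℝ)) B)).lim
    have ha' : Tendsto (fun i => (μs i : Measure (ι → ℝ)) (Set.Iic t)) L (𝓝 α) := ha
    have hb' : Tendsto (fun i => (μs i : Measure (ι → ℝ)) B) L (𝓝 β) := hb
    rw [ha'.limsup_eq] at h1
    rw [hb'.limsup_eq] at h2
    have hs : (μ : Measure (ι → ℝ)) Set.univ ≤ α + β :=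
      le_of_tendsto_of_tendsto' hmass (ha'.add hb') fun i => hcov _
    rw [hdis] at hs
    have : α = (μ : Measure (ι → ℝ)) (Set.Iic t) := by
      refine le_antisymm h1 ?_
      have h4 := hs.trans (add_le_add_right h2 α)
      exact ENNReal.le_of_add_le_add_right (measure_ne_top _ _) h4
    rwa [this] at ha'
  exact (ENNReal.tendsto_toReal (measure_ne_top _ _)).comp h3


lemma exists_limit (g : (ι → ℝ) → ℝ) (hg : hk0 g ≠ ⊤) :
    ∃ P Q : FiniteMeasure (ι → ℝ), P (cubeK ι)ᶜ = 0 ∧ Q (cubeK ι)ᶜ = 0 ∧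
      ∀ t ∈ cubeK ι, (∀ k, (P : Measure (ι → ℝ)) {s | s k = t k} = 0) →
        (∀ k, (Q : Measure (ι → ℝ)) {s | s k = t k} = 0) →
        (P : Measure (ι → ℝ)).real (Set.Iic t) - (Q : Measure (ι → ℝ)).real (Set.Iic t) = g t := by
  obtain ⟨C, hC⟩ := approx g hg
  choose P Q hP hQ hPQ using hC
  set L : Ultrafilter (Finset ℝ) := Ultrafilter.of atTop
  have hL : (L : Filter (Finset ℝ)) ≤ atTop := Ultrafilter.of_le _
  have hK : IsCompact (cubeK ι) := isCompact_univ_pi fun _ => isCompact_Icc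
  have hc := isCompact_setOfPred_finiteMeasure_le_of_isCompact C hK
  obtain ⟨p, hp, hpl⟩ := hc.ultrafilter_le_nhds' (L.map P) (by
    rw [Ultrafilter.mem_map]; exact Filter.univ_mem' hP)
  obtain ⟨q, hq, hql⟩ := hc.ultrafilter_le_nhds' (L.map Q) (by
    rw [Ultrafilter.mem_map]; exact Filter.univ_mem' hQ)
  refine ⟨p, q, hp.2, hq.2, fun t ht h1 h2 => ?_⟩
  have e1 := tendsto_Iic L P p hpl t h1
  have e2 := tendsto_Iic L Q q hql t h2
  have e3 := e1.sub e2
  refine tendsto_nhds_unique_of_eventuallyEq e3 (tendsto_const_nhds (x := g t)) ?_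
  refine hL ?_
  filter_upwards [eventually_ge_atTop (Finset.univ.image t)] with F hF
  exact hPQ F t fun k => ⟨hF (Finset.mem_image_of_mem _ (Finset.mem_univ _)), ht k trivial⟩

lemma ae_null (μ : Measure (ι → ℝ)) [IsFiniteMeasure μ] :
    ∀ᵐ t : ι → ℝ, ∀ k, μ {s | s k = t k} = 0 := by
  rw [ae_all_iff]
  intro k
  have hc := Measure.countable_meas_level_set_pos (μ := μ) (measurable_pi_apply k)
  have h : ∀ᵐ c : ℝ, μ {s | s k = c} = 0 := by
    rw [ae_iff]
    refine measure_mono_null ?_ (hc.measure_zero volume)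
    intro c hc; exact pos_iff_ne_zero.2 hc
  exact (Measure.quasiMeasurePreserving_eval (μ := fun _ : ι => (volume : Measure ℝ)) k).ae h

def cubeO (ι : Type*) : Set (ι → ℝ) := {t | ∀ j, 0 ≤ t j ∧ t j < 1}

lemma measurableSet_cubeO : MeasurableSet (cubeO ι) := by
  have : cubeO ι = Set.univ.pi fun _ => Set.Ico (0:ℝ) 1 := by
    ext s; simp [cubeO, Set.mem_pi]
  rw [this]; exact MeasurableSet.univ_pi fun _ => measurableSet_Ico

lemma box_eq (μ : Measure (ι → ℝ)) (hK : μ (cubeK ι)ᶜ = 0) (t : ι → ℝ)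
    (ht : t ∈ cubeK ι) (h0 : ∀ k, μ {s | s k = t k} = 0) :
    (μ.restrict (cubeO ι)).real {s | ∀ j, 0 ≤ s j ∧ s j ≤ t j ∧ s j < 1} = μ.real (Set.Iic t) := by
  rw [measureReal_def, measureReal_def, Measure.restrict_apply (measurableSet_box t)]
  congr 1
  refine le_antisymm (measure_mono fun s hs k => (hs.1 k).2.1) ?_
  have : Set.Iic t ⊆ ({s : ι → ℝ | ∀ j, 0 ≤ s j ∧ s j ≤ t j ∧ s j < 1} ∩ cubeO ι) ∪
      ((cubeK ι)ᶜ ∪ ⋃ k, {s | s k = t k}) := by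
    intro s hs
    by_cases h1 : s ∈ cubeK ι
    · by_cases h2 : ∃ k, s k = t k
      · exact Or.inr (Or.inr (Set.mem_iUnion.2 h2))
      · push Not at h2
        have h3 : ∀ j, s j < 1 := fun j => (lt_of_le_of_ne (hs j) (h2 j)).trans_le (ht j trivial).2
        exact Or.inl ⟨fun j => ⟨(h1 j trivial).1, hs j, h3 j⟩, fun j => ⟨(h1 j trivial).1, h3 j⟩⟩
    · exact Or.inr (Or.inl h1)
  refine (measure_mono this).trans ((measure_union_le _ _).trans ?_)
  rw [measure_union_null hK (measure_iUnion_null h0), add_zero]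

lemma exists_signed (g : (ι → ℝ) → ℝ) (hg : hk0 g ≠ ⊤) :
    ∃ ν : SignedMeasure (ι → ℝ), ν.totalVariation {t | ∀ j, 0 ≤ t j ∧ t j < 1}ᶜ = 0 ∧
      ∀ᵐ t : ι → ℝ, t ∈ cubeK ι → ν {s | ∀ j, 0 ≤ s j ∧ s j ≤ t j ∧ s j < 1} = g t := by
  obtain ⟨P, Q, hP, hQ, h⟩ := exists_limit g hg
  rw [FiniteMeasure.null_iff_toMeasure_null] at hP hQ
  set p : Measure (ι → ℝ) := (P : Measure (ι → ℝ)).restrict (cubeO ι) with hp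
  set q : Measure (ι → ℝ) := (Q : Measure (ι → ℝ)).restrict (cubeO ι) with hq
  have happ : ∀ A, MeasurableSet A → (p.toSignedMeasure - q.toSignedMeasure) A = p.real A - q.real A := by
    intro A hA
    rw [VectorMeasure.sub_apply, Measure.toSignedMeasure_apply_measurable hA, Measure.toSignedMeasure_apply_measurable hA]
  refine ⟨p.toSignedMeasure - q.toSignedMeasure, ?_, ?_⟩
  · have hac : (p.toSignedMeasure - q.toSignedMeasure) ≪ᵥ (p + q).toENNRealVectorMeasure := by
      refine VectorMeasure.AbsolutelyContinuous.mk fun A hA h0 => ?_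
      rw [Measure.toENNRealVectorMeasure_apply_measurable hA, Measure.add_apply, add_eq_zero] at h0
      rw [happ A hA, measureReal_def, measureReal_def, h0.1, h0.2]; simp
    rw [SignedMeasure.absolutelyContinuous_ennreal_iff] at hac
    refine hac ?_
    rw [VectorMeasure.ennrealToMeasure_toENNRealVectorMeasure]
    change (p + q) (cubeO ι)ᶜ = 0
    simp [hp, hq, Measure.restrict_apply measurableSet_cubeO.compl]
  · filter_upwards [ae_null (P : Measure (ι → ℝ)), ae_null (Q : Measure (ι → ℝ))] with t h1 h2 ht
    rw [happ _ (measurableSet_box t), box_eq _ hP t ht h1, box_eq _ hQ t ht h2]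
    exact h t ht h1 h2

end helpers

/-- A function on `[0,1]^d` admits a MARS representation iff it can be
written as `a₀ + Σ_{∅≠S} ∫_{Π_{j∈S}[0,x_j]} g_S` with each `g_S` of finite HK0 variation
and the appropriate one-sided continuity; moreover, the two representations correspond
via `g_S(t) = ν_S([0,t] ∩ [0,1)^S)`, and then `Σ_S |ν_S|(… \ {0}) = Σ_S V_HK0(g_S)`. -/
theorem statement17 (d : ℕ) (hd : 1 ≤ d) (f : (Fin d → ℝ) → ℝ) :
    ((∃ R : MarsRep d, ∀ x : Fin d → ℝ, (∀ k, x k ∈ Set.Icc (0 : ℝ) 1) →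
        f x = marsFun R x) ↔
      (∃ (a0 : ℝ) (g : ∀ S : Finset (Fin d), ({j // j ∈ S} → ℝ) → ℝ),
        (∀ S : Finset (Fin d), S.Nonempty → GoodFace (g S)) ∧
        ∀ x : Fin d → ℝ, (∀ k, x k ∈ Set.Icc (0 : ℝ) 1) →
          f x = a0 + ∑ S : Finset (Fin d),
            if S.Nonempty then
              ∫ t in Set.univ.pi fun j : {j // j ∈ S} => Set.Icc (0 : ℝ) (x j.1),
                g S t
            else 0)) ∧
    (∀ R : MarsRep d,
      (∀ S : Finset (Fin d), S.Nonempty → GoodFace (repCDF R S)) ∧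
      (∀ x : Fin d → ℝ, (∀ k, x k ∈ Set.Icc (0 : ℝ) 1) →
        marsFun R x = R.a0 + ∑ S : Finset (Fin d),
          if S.Nonempty then
            ∫ t in Set.univ.pi fun j : {j // j ∈ S} => Set.Icc (0 : ℝ) (x j.1),
              repCDF R S t
          else 0) ∧
      marsVar R = ∑ S : Finset (Fin d),
        if S.Nonempty then hk0 (repCDF R S) else 0) := by
  refine ⟨⟨?_, ?_⟩, fun R => ?_⟩
  · rintro ⟨R, hR⟩
    refine ⟨R.a0, repCDF R, (part2 R).1, fun x hx => ?_⟩
    rw [hR x hx, (part2 R).2.1 x]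
  · rintro ⟨a0, g, hg, hf⟩
    have hex : ∀ S : Finset (Fin d), ∃ ν : SignedMeasure ({j // j ∈ S} → ℝ),
        ν.totalVariation {t : {j // j ∈ S} → ℝ | ∀ j, 0 ≤ t j ∧ t j < 1}ᶜ = 0 ∧
        (S.Nonempty → ∀ᵐ t : {j // j ∈ S} → ℝ, t ∈ cubeK {j // j ∈ S} →
          ν {s | ∀ j, 0 ≤ s j ∧ s j ≤ t j ∧ s j < 1} = g S t) := by
      intro S
      by_cases hS : S.Nonempty
      · obtain ⟨ν, h1, h2⟩ := exists_signed (g S) (hg S hS).1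
        exact ⟨ν, h1, fun _ => h2⟩
      · exact ⟨0, by simp [SignedMeasure.totalVariation_zero], fun h => absurd h hS⟩
    choose ν h1 h2 using hex
    refine ⟨⟨a0, ν, h1⟩, fun x hx => ?_⟩
    rw [hf x hx, (part2 _).2.1 x]
    congr 1
    refine Finset.sum_congr rfl fun S _ => ?_
    split_ifs with hS
    · refine setIntegral_congr_ae (MeasurableSet.univ_pi fun _ => measurableSet_Icc) ?_
      filter_upwards [h2 S hS] with t ht htx
      exact (ht fun j _ => ⟨(htx j trivial).1, (htx j trivial).2.trans (hx j.1).2⟩).symm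
    · rfl
  · exact ⟨(part2 R).1, fun x _ => (part2 R).2.1 x, (part2 R).2.2⟩
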